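/- arXiv:2402.07882 — 4 statements merged into one kernel-verified Lean document; each statement's English description precedes it below -/
import Mathlib

section
/- Let e ∈ {1,2} and let r be a positive integer with r ≡ e+1 (mod 2). Let V be an F-vector space of dimension r+3 and Q a nondegenerate quadratic form on V of Witt defect e. Let S be a spread of Q, fix Σ₀ ∈ S, a nonzero vector p ∈ Σ₀, and a subspace H of p^⊥ with dim H = r+1 and p ∉ H. For each Σ ∈ S \ {Σ₀} set Π_Σ = (span{p} + Σ) ∩ H. Then for all distinct Σ, Σ' ∈ S \ {Σ₀}, dim(Π_Σ ∩ Π_{Σ'}) ≤ 1. -/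
open Module Submodule

section Defs

variable {F : Type*} [Field F] {V : Type*} [AddCommGroup V] [Module F V]

/-- A subspace is totally singular if the quadratic form vanishes on it. -/
def IsTotallySingular (Q : QuadraticForm F V) (W : Submodule F V) : Prop :=
  ∀ x ∈ W, Q x = 0

/-- The Witt index: maximal dimension of a totally singular subspace. -/
noncomputable def wittIndex (Q : QuadraticForm F V) : ℕ :=
  sSup {n : ℕ | ∃ W : Submodule F V, IsTotallySingular Q W ∧ Module.finrank F ↥W = n}

/-- Nondegeneracy: the only singular vector orthogonal to everything is `0`. -/
def QuadNondeg (Q : QuadraticForm F V) : Prop :=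
  ∀ v : V, Q v = 0 → (∀ x : V, QuadraticMap.polar Q v x = 0) → v = 0

/-- A generator: totally singular subspace of dimension the Witt index. -/
def IsGenerator (Q : QuadraticForm F V) (G : Submodule F V) : Prop :=
  IsTotallySingular Q G ∧ Module.finrank F ↥G = wittIndex Q

/-- A spread of `Q`. -/
def IsSpread (Q : QuadraticForm F V) (S : Set (Submodule F V)) : Prop :=
  (∀ G ∈ S, IsGenerator Q G) ∧
  (∀ G ∈ S, ∀ G' ∈ S, G ≠ G' → G ⊓ G' = ⊥) ∧
  (∀ v : V, Q v = 0 → ∃ G ∈ S, v ∈ G)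

/-- The perp of a vector with respect to the polar form of `Q`. -/
def vecPerp (Q : QuadraticForm F V) (u : V) : Submodule F V :=
  LinearMap.ker (QuadraticMap.polarBilin Q u)

/-- The perp of a subspace with respect to the polar form of `Q`. -/
def subPerp (Q : QuadraticForm F V) (G : Submodule F V) : Submodule F V :=
  ⨅ g ∈ G, vecPerp Q g

/-- Hyperbolic (e = 0), parabolic (e = 1) or elliptic (e = 2) affine vector space
partition for `(U, H, Q, Pgen)`. -/
def IsAvsp [Fintype F] (e r : ℕ) {U : Type*} [AddCommGroup U] [Module F U]
    (H : Submodule F U) (Q : QuadraticForm F ↥H) (Pgen : Submodule F ↥H)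
    (P : Set (Submodule F U)) : Prop :=
  P.ncard = Fintype.card F ^ ((r + e + 1) / 2) ∧
  (∀ S ∈ P, Module.finrank F ↥S = (r + 3 - e) / 2 ∧ ¬ S ≤ H) ∧
  (∀ L : Submodule F U, Module.finrank F ↥L = 1 → ¬ L ≤ H → ∃! S, S ∈ P ∧ L ≤ S) ∧
  (∀ S ∈ P, IsGenerator Q (S.comap H.subtype) ∧ S.comap H.subtype ⊓ Pgen = ⊥) ∧
  (∀ S ∈ P, ∀ T ∈ P, S ≠ T → S.comap H.subtype ≠ T.comap H.subtype) ∧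
  (∀ S ∈ P, ∀ T ∈ P, S ≠ T → Module.finrank F ↥(S ⊓ T) ≤ 1) ∧
  (∀ S ∈ P, ∀ T ∈ P, S ≠ T →
    Module.finrank F ↥(S.comap H.subtype ⊓ T.comap H.subtype) = 1 →
      QuadNondeg (Q.comp ((S ⊔ T).comap H.subtype).subtype) ∧
      Module.finrank F ↥((S ⊔ T).comap H.subtype) =
        2 * wittIndex (Q.comp ((S ⊔ T).comap H.subtype).subtype))

end Defs

/-!
A subspace `K` disjoint from `N` embeds in the quotient by `N`, so `K ≤ L ⊔ N` forces
`dim K ≤ dim L`. Put `P = span {p}` and let `K` be the intersection to be bounded. By modularity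
`(P ⊔ G) ⊓ (P ⊔ G') = (G ⊓ (P ⊔ G')) ⊔ P`, and `K ≤ H` is disjoint from `P`, so
`dim K ≤ dim (G ⊓ (P ⊔ G'))`. The latter subspace is disjoint from `G'` and contained in `P ⊔ G'`,
so its dimension is at most `dim P ≤ 1`.
-/

section Rank

variable {R M : Type*} [Ring R] [AddCommGroup M] [Module R M]

theorem rank_le_of_disjoint_of_le_sup {K L N : Submodule R M} (hKN : Disjoint K N)
    (hK : K ≤ L ⊔ N) : Module.rank R K ≤ Module.rank R L := by
  have hinj : Function.Injective (N.mkQ.domRestrict K) := by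
    rwa [← LinearMap.ker_eq_bot, LinearMap.ker_domRestrict, ← disjoint_iff_comap_eq_bot, ker_mkQ]
  have hmap : K.map N.mkQ ≤ L.map N.mkQ := by
    simpa [Submodule.map_sup] using map_mono (f := N.mkQ) hK
  calc Module.rank R K
      ≤ Module.rank R (K.map N.mkQ) := by
        rw [← LinearMap.range_domRestrict]
        exact (LinearEquiv.ofInjective _ hinj).rank_eq.le
    _ ≤ Module.rank R (L.map N.mkQ) := rank_mono hmap
    _ ≤ Module.rank R L := rank_map_le _ _

theorem rank_le_of_disjoint_of_le_sup_of_le_sup {G G' K P : Submodule R M}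
    (hG : Disjoint G G') (hKP : Disjoint K P) (hK : K ≤ P ⊔ G) (hK' : K ≤ P ⊔ G') :
    Module.rank R K ≤ Module.rank R P := by
  have hmodular : (P ⊔ G) ⊓ (P ⊔ G') = (G ⊓ (P ⊔ G')) ⊔ P := by
    rw [sup_inf_assoc_of_le G le_sup_left, sup_comm]
  calc Module.rank R K
      ≤ Module.rank R ↥(G ⊓ (P ⊔ G')) :=
        rank_le_of_disjoint_of_le_sup hKP (hmodular ▸ le_inf hK hK')
    _ ≤ Module.rank R P :=
        rank_le_of_disjoint_of_le_sup (hG.mono_left inf_le_left) inf_le_right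

end Rank

theorem lemma_aux_i_general {F V : Type*} [DivisionRing F] [AddCommGroup V] [Module F V]
    {G G' H : Submodule F V} {p : V} (hG : Disjoint G G') (hp : p ∉ H) :
    Module.rank F ↥(((span F {p} ⊔ G) ⊓ H) ⊓ ((span F {p} ⊔ G') ⊓ H)) ≤ 1 := by
  have hHp : Disjoint H (span F {p}) := disjoint_span_singleton.2 fun h => absurd h hp
  calc Module.rank F ↥(((span F {p} ⊔ G) ⊓ H) ⊓ ((span F {p} ⊔ G') ⊓ H))
      ≤ Module.rank F (span F {p}) :=
        rank_le_of_disjoint_of_le_sup_of_le_sup hG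
          (hHp.mono_left (inf_le_left.trans inf_le_right))
          (inf_le_left.trans inf_le_left) (inf_le_right.trans inf_le_left)
    _ ≤ 1 := by simpa using rank_span_le (R := F) {p}

theorem lemma_aux_i {F : Type*} [Field F] [Fintype F] (e r : ℕ)
    (he : e = 1 ∨ e = 2) (hr : 0 < r) (hmod : r % 2 = (e + 1) % 2)
    (V : Type*) [AddCommGroup V] [Module F V] [FiniteDimensional F V]
    (hdim : Module.finrank F V = r + 3)
    (Q : QuadraticForm F V) (hQnd : QuadNondeg Q)
    (hdef : Module.finrank F V = 2 * wittIndex Q + e)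
    (S : Set (Submodule F V)) (hS : IsSpread Q S)
    (G₀ : Submodule F V) (hG₀ : G₀ ∈ S)
    (p : V) (hp : p ∈ G₀) (hp0 : p ≠ 0)
    (H : Submodule F V) (hH : H ≤ vecPerp Q p)
    (hHdim : Module.finrank F ↥H = r + 1) (hpH : p ∉ H) :
    ∀ G ∈ S, ∀ G' ∈ S, G ≠ G₀ → G' ≠ G₀ → G ≠ G' →
      Module.finrank F
        ↥(((Submodule.span F {p} ⊔ G) ⊓ H) ⊓ ((Submodule.span F {p} ⊔ G') ⊓ H)) ≤ 1 :=
  fun G hG G' hG' _ _ hne => finrank_le_of_rank_le <| by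
    simpa using lemma_aux_i_general (disjoint_iff.2 (hS.2.1 G hG G' hG' hne)) hpH
end

section
/- Let r be a positive integer with r ≡ 1 (mod 4). Let V be an F-vector space of dimension r+3 and Q a nondegenerate quadratic form on V of Witt defect 0 (a hyperbolic quadric). Let S be a spread of Q, fix Σ₀ ∈ S, a nonzero vector p ∈ Σ₀, and a subspace H of p^⊥ with dim H = r+1 and p ∉ H. For each Σ ∈ S \ {Σ₀} set Π_Σ = (span{p} + Σ) ∩ H. Then for all distinct Σ, Σ' ∈ S \ {Σ₀}, dim(Π_Σ ∩ Π_{Σ'}) = 1. -/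
open Module Submodule

/-!
Write `P` for the line spanned by `p`. Since `Q` is hyperbolic, `V` is the direct sum of any two
members `G`, `G'` of the spread; if both differ from `G₀`, then `P` meets neither of them, hence
`W = (P ⊔ G) ⊓ (P ⊔ G')` is a plane. If `u' = u + c • p` with `u ∈ G` and `u' ∈ G'`, then evaluating
`Q` gives `c * B(p, u) = 0`, while `c = 0` forces `u = 0`; either way `u ∈ p^⊥`, so `W ≤ p^⊥`.
Since `P ≤ W` and `H` is a complement of `P` in `p^⊥`, intersecting `W` with `H` lowers its
dimension by one.
-/

section Dimension

variable {K V : Type*} [DivisionRing K] [AddCommGroup V] [Module K V] [FiniteDimensional K V]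

theorem finrank_sup_of_disjoint {A B : Submodule K V} (h : Disjoint A B) :
    finrank K ↥(A ⊔ B) = finrank K A + finrank K B := by
  rw [← finrank_sup_add_finrank_inf_eq, h.eq_bot, finrank_bot, add_zero]

theorem finrank_sup_inf_sup_of_isCompl {P A B : Submodule K V} (hAB : IsCompl A B)
    (hPA : Disjoint P A) (hPB : Disjoint P B) :
    finrank K ↥((P ⊔ A) ⊓ (P ⊔ B)) = 2 * finrank K P := by
  have hsup : (P ⊔ A) ⊔ (P ⊔ B) = ⊤ := by
    rw [← sup_sup_distrib_left, hAB.sup_eq_top, sup_top_eq]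
  have hinf := finrank_sup_add_finrank_inf_eq (P ⊔ A) (P ⊔ B)
  rw [hsup, finrank_top, finrank_sup_of_disjoint hPA, finrank_sup_of_disjoint hPB,
    ← finrank_add_eq_of_isCompl hAB] at hinf
  omega

theorem finrank_inf_add_of_le_of_le_sup {P H W : Submodule K V} (hPH : Disjoint P H)
    (hPW : P ≤ W) (hW : W ≤ P ⊔ H) :
    finrank K ↥(H ⊓ W) + finrank K P = finrank K W := by
  rw [add_comm, ← finrank_sup_of_disjoint (hPH.mono_right inf_le_left), ← sup_inf_assoc_of_le H hPW,
    inf_eq_right.2 hW]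

end Dimension

section Perp

variable {F : Type*} [Field F] {V : Type*} [AddCommGroup V] [Module F V] {Q : QuadraticForm F V}
  {p : V}

theorem mem_vecPerp {u x : V} : x ∈ vecPerp Q u ↔ QuadraticMap.polar Q u x = 0 :=
  Iff.rfl

theorem self_mem_vecPerp (hp : Q p = 0) : p ∈ vecPerp Q p := by
  rw [mem_vecPerp, QuadraticMap.polar_self, hp, smul_zero]

theorem QuadNondeg.vecPerp_ne_top (hQ : QuadNondeg Q) (hp : Q p = 0) (hp0 : p ≠ 0) :
    vecPerp Q p ≠ ⊤ :=
  fun htop => hp0 (hQ p hp fun _ => mem_vecPerp.1 (htop ▸ mem_top))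

theorem QuadNondeg.span_singleton_sup_eq_vecPerp [FiniteDimensional F V] (hQ : QuadNondeg Q)
    (hp : Q p = 0) {H : Submodule F V} (hH : H ≤ vecPerp Q p) (hpH : p ∉ H)
    (hdim : finrank F V = finrank F H + 2) :
    span F {p} ⊔ H = vecPerp Q p := by
  have hle : span F {p} ⊔ H ≤ vecPerp Q p :=
    sup_le ((span_singleton_le_iff_mem _ _).2 (self_mem_vecPerp hp)) hH
  have hp0 : p ≠ 0 := (ne_of_mem_of_not_mem H.zero_mem hpH).symm
  have hlt : finrank F (vecPerp Q p) < finrank F V := finrank_lt (hQ.vecPerp_ne_top hp hp0)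
  refine eq_of_le_of_finrank_le hle ?_
  rw [sup_comm, finrank_sup_span_singleton hpH]
  omega

theorem span_singleton_sup_inf_sup_le_vecPerp (hp : Q p = 0) {G G' : Submodule F V}
    (hG : IsTotallySingular Q G) (hG' : IsTotallySingular Q G') (hGG' : Disjoint G G') :
    (span F {p} ⊔ G) ⊓ (span F {p} ⊔ G') ≤ vecPerp Q p := by
  rintro x ⟨hx, hx'⟩
  obtain ⟨_, hap, u, hu, rfl⟩ := mem_sup.1 hx
  obtain ⟨_, hbp, u', hu', hxu⟩ := mem_sup.1 hx'
  obtain ⟨a, rfl⟩ := mem_span_singleton.1 hap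
  obtain ⟨b, rfl⟩ := mem_span_singleton.1 hbp
  have hu'_eq : u' = u + (a - b) • p := by
    linear_combination (norm := module) hxu
  have hmul : (a - b) * QuadraticMap.polar Q p u = 0 := by
    calc (a - b) * QuadraticMap.polar Q p u = Q (u + (a - b) • p) := by
          simp [QuadraticMap.map_add Q u, QuadraticMap.map_smul, QuadraticMap.polar_comm Q u,
            hG u hu, hp]
      _ = 0 := hu'_eq ▸ hG' u' hu'
  have hpu : u ∈ vecPerp Q p := by
    rcases mul_eq_zero.1 hmul with hab | hpolar
    · have huG' : u ∈ G' := by simpa [hu'_eq, hab] using hu'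
      exact disjoint_def.1 hGG' u hu huG' ▸ zero_mem _
    · exact hpolar
  exact add_mem (smul_mem _ a (self_mem_vecPerp hp)) hpu

end Perp

section Spread

variable {F : Type*} [Field F] {V : Type*} [AddCommGroup V] [Module F V] {Q : QuadraticForm F V}
  {S : Set (Submodule F V)} {G G' : Submodule F V}

theorem IsGenerator.isCompl [FiniteDimensional F V] (hG : IsGenerator Q G) (hG' : IsGenerator Q G')
    (hdim : finrank F V = 2 * wittIndex Q) (hGG' : Disjoint G G') : IsCompl G G' := by
  refine ⟨hGG', codisjoint_iff.2 (eq_top_of_finrank_eq ?_)⟩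
  rw [finrank_sup_of_disjoint hGG', hG.2, hG'.2, hdim, two_mul]

theorem IsSpread.disjoint (hS : IsSpread Q S) (hG : G ∈ S) (hG' : G' ∈ S) (hne : G ≠ G') :
    Disjoint G G' :=
  disjoint_iff.2 (hS.2.1 G hG G' hG' hne)

theorem IsSpread.notMem_of_mem (hS : IsSpread Q S) (hG : G ∈ S) (hG' : G' ∈ S) (hne : G ≠ G')
    {p : V} (hp : p ∈ G) (hp0 : p ≠ 0) : p ∉ G' :=
  fun hp' => hp0 (disjoint_def.1 (hS.disjoint hG hG' hne) p hp hp')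

end Spread

theorem lemma_aux_ii_general {F V : Type*} [Field F] [AddCommGroup V] [Module F V]
    [FiniteDimensional F V] {Q : QuadraticForm F V} (hQ : QuadNondeg Q) {G G' : Submodule F V}
    (hG : IsTotallySingular Q G) (hG' : IsTotallySingular Q G') (hGG' : IsCompl G G')
    {p : V} (hp : Q p = 0) (hpG : p ∉ G) (hpG' : p ∉ G')
    {H : Submodule F V} (hH : H ≤ vecPerp Q p) (hpH : p ∉ H)
    (hdim : finrank F V = finrank F H + 2) :
    finrank F ↥(((span F {p} ⊔ G) ⊓ H) ⊓ ((span F {p} ⊔ G') ⊓ H)) = 1 := by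
  have hP : finrank F (span F {p}) = 1 :=
    finrank_span_singleton (ne_of_mem_of_not_mem G.zero_mem hpG).symm
  have hdisj : ∀ {A : Submodule F V}, p ∉ A → Disjoint (span F {p}) A := fun hA =>
    (disjoint_span_singleton_of_notMem hA).symm
  have hplane : finrank F ↥((span F {p} ⊔ G) ⊓ (span F {p} ⊔ G')) = 2 * finrank F (span F {p}) :=
    finrank_sup_inf_sup_of_isCompl hGG' (hdisj hpG) (hdisj hpG')
  have hperp : (span F {p} ⊔ G) ⊓ (span F {p} ⊔ G') ≤ span F {p} ⊔ H :=
    (span_singleton_sup_inf_sup_le_vecPerp hp hG hG' hGG'.disjoint).trans_eq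
      (hQ.span_singleton_sup_eq_vecPerp hp hH hpH hdim).symm
  have hcut := finrank_inf_add_of_le_of_le_sup (hdisj hpH) (le_inf le_sup_left le_sup_left) hperp
  rw [← inf_inf_distrib_right, inf_comm]
  omega

theorem lemma_aux_ii {F : Type*} [Field F] [Fintype F] (r : ℕ)
    (hr : 0 < r) (hmod : r % 4 = 1)
    (V : Type*) [AddCommGroup V] [Module F V] [FiniteDimensional F V]
    (hdim : Module.finrank F V = r + 3)
    (Q : QuadraticForm F V) (hQnd : QuadNondeg Q)
    (hdef : Module.finrank F V = 2 * wittIndex Q)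
    (S : Set (Submodule F V)) (hS : IsSpread Q S)
    (G₀ : Submodule F V) (hG₀ : G₀ ∈ S)
    (p : V) (hp : p ∈ G₀) (hp0 : p ≠ 0)
    (H : Submodule F V) (hH : H ≤ vecPerp Q p)
    (hHdim : Module.finrank F ↥H = r + 1) (hpH : p ∉ H) :
    ∀ G ∈ S, ∀ G' ∈ S, G ≠ G₀ → G' ≠ G₀ → G ≠ G' →
      Module.finrank F
        ↥(((Submodule.span F {p} ⊔ G) ⊓ H) ⊓ ((Submodule.span F {p} ⊔ G') ⊓ H)) = 1 := by
  intro G hG G' hG' hGne hG'ne hne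
  exact lemma_aux_ii_general hQnd (hS.1 G hG).1 (hS.1 G' hG').1
    ((hS.1 G hG).isCompl (hS.1 G' hG') hdef (hS.disjoint hG hG' hne)) ((hS.1 G₀ hG₀).1 p hp)
    (hS.notMem_of_mem hG₀ hG hGne.symm hp hp0) (hS.notMem_of_mem hG₀ hG' hG'ne.symm hp hp0)
    hH hpH (by omega)
end

section
/- Let e ∈ {0,1,2} and let r be a positive integer with r ≡ e+1 (mod 2). Let V be an F-vector space of dimension r+3 and Q a nondegenerate quadratic form on V of Witt defect e. Let S be a spread of Q, fix Σ₀ ∈ S, a nonzero vector p ∈ Σ₀, and a subspace H of p^⊥ with dim H = r+1 and p ∉ H. For each Σ ∈ S \ {Σ₀} set Π_Σ = (span{p} + Σ) ∩ H. Then every nonzero singular vector x ∈ H with x ∉ Σ₀ lies in exactly q of the subspaces Π_Σ, i.e., the number of Σ ∈ S \ {Σ₀} with x ∈ Π_Σ equals q. -/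
open Module Submodule

/-!
Since `p` and `x` are orthogonal singular vectors, every vector `x + c • p` is singular, so it lies
in a member of `S`, which is unique because the vector is nonzero. That member is not `G₀`, as
`p ∈ G₀` and `x ∉ G₀`; so it misses `p` and meets the affine line `{x + c • p}` only once. Hence the
members of `S` other than `G₀` that meet this line, i.e. those with `x ∈ span {p} ⊔ G`, are in
bijection with the scalars `c`.
-/

theorem map_add_smul_eq_zero_of_isOrtho {R M N : Type*} [CommRing R] [AddCommGroup M] [Module R M]
    [AddCommGroup N] [Module R N] {Q : QuadraticMap R M N} {x p : M} (hx : Q x = 0) (hp : Q p = 0)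
    (hxp : Q.IsOrtho x p) (c : R) : Q (x + c • p) = 0 := by
  have hxcp : QuadraticMap.polar Q x (c • p) = 0 := by
    rw [QuadraticMap.polar_smul_right, hxp.polar_eq_zero, smul_zero]
  rw [QuadraticMap.map_add Q, hx, QuadraticMap.map_smul, hp, hxcp, smul_zero, add_zero, add_zero]

theorem mem_span_singleton_sup_iff {R M : Type*} [Ring R] [AddCommGroup M] [Module R M] {x p : M}
    {W : Submodule R M} : x ∈ span R {p} ⊔ W ↔ ∃ c : R, x + c • p ∈ W := by
  rw [← W.span_eq, ← span_insert, mem_span_insert', W.span_eq]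

theorem add_smul_ne_zero_of_notMem_span {R M : Type*} [Ring R] [AddCommGroup M] [Module R M]
    {x p : M} (hx : x ∉ span R {p}) (c : R) : x + c • p ≠ 0 :=
  fun h ↦ hx (mem_span_singleton.2 ⟨-c, by rw [neg_smul, eq_neg_of_add_eq_zero_left h]⟩)

section AffineLine

variable {K V : Type*} [DivisionRing K] [AddCommGroup V] [Module K V] {x p : V}

theorem eq_of_add_smul_mem_of_notMem {W : Submodule K V} (hp : p ∉ W) {c d : K}
    (hc : x + c • p ∈ W) (hd : x + d • p ∈ W) : c = d := by
  have hsub : (c - d) • p ∈ W := by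
    simpa only [add_sub_add_left_eq_sub, ← sub_smul] using W.sub_mem hc hd
  by_contra hne
  exact hp ((W.smul_mem_iff (sub_ne_zero.2 hne)).1 hsub)

theorem encard_setOf_mem_span_singleton_sup {T : Set (Submodule K V)} (hT : T.PairwiseDisjoint id)
    (hpT : ∀ G ∈ T, p ∉ G) (hx : x ∉ span K {p}) (hcover : ∀ c : K, ∃ G ∈ T, x + c • p ∈ G) :
    {G ∈ T | x ∈ span K {p} ⊔ G}.encard = ENat.card K := by
  choose f hfT hf using hcover
  have f_injective : Function.Injective f := fun c d hcd ↦
    eq_of_add_smul_mem_of_notMem (hpT _ (hfT c)) (hf c) (hcd ▸ hf d)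
  have f_unique {G : Submodule K V} (hG : G ∈ T) {c : K} (hc : x + c • p ∈ G) : f c = G :=
    hT.elim (hfT c) hG fun hdisj ↦
      add_smul_ne_zero_of_notMem_span hx c (disjoint_def.1 hdisj _ (hf c) hc)
  have range_f : Set.range f = {G ∈ T | x ∈ span K {p} ⊔ G} := by
    ext G
    constructor
    · rintro ⟨c, rfl⟩
      exact ⟨hfT c, mem_span_singleton_sup_iff.2 ⟨c, hf c⟩⟩
    · rintro ⟨hG, hxG⟩
      obtain ⟨c, hc⟩ := mem_span_singleton_sup_iff.1 hxG
      exact ⟨c, f_unique hG hc⟩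
  rw [← range_f, ← Set.image_univ, f_injective.encard_image, Set.encard_univ]

end AffineLine

theorem IsSpread.pairwiseDisjoint {F V : Type*} [Field F] [AddCommGroup V] [Module F V]
    {Q : QuadraticForm F V} {S : Set (Submodule F V)} (hS : IsSpread Q S) :
    S.PairwiseDisjoint id :=
  fun G hG G' hG' hne ↦ disjoint_iff.2 (hS.2.1 G hG G' hG' hne)

theorem mem_vecPerp_iff_isOrtho {F V : Type*} [Field F] [AddCommGroup V] [Module F V]
    {Q : QuadraticForm F V} {u v : V} : v ∈ vecPerp Q u ↔ Q.IsOrtho u v :=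
  QuadraticMap.isOrtho_polarBilin

theorem lemma_aux_iii_general {F V N : Type*} [Field F] [AddCommGroup V] [Module F V]
    [AddCommGroup N] [Module F N] {Q : QuadraticMap F V N} {S : Set (Submodule F V)}
    (hS : S.PairwiseDisjoint id) (hcover : ∀ v, Q v = 0 → ∃ G ∈ S, v ∈ G) {G₀ : Submodule F V}
    (hG₀ : G₀ ∈ S) {p : V} (hp : p ∈ G₀) (hp0 : p ≠ 0) (hpQ : Q p = 0) {x : V} (hxQ : Q x = 0)
    (hxp : Q.IsOrtho x p) (hxG₀ : x ∉ G₀) :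
    {G ∈ S \ {G₀} | x ∈ span F {p} ⊔ G}.encard = ENat.card F := by
  refine encard_setOf_mem_span_singleton_sup (hS.subset Set.sdiff_subset) ?_ ?_ fun c ↦ ?_
  · rintro G ⟨hG, hne⟩ hpG
    exact hp0 (disjoint_def.1 (hS hG hG₀ hne) p hpG hp)
  · exact fun hx ↦ hxG₀ ((span_singleton_le_iff_mem p G₀).2 hp hx)
  · obtain ⟨G, hG, hxG⟩ := hcover _ (map_add_smul_eq_zero_of_isOrtho hxQ hpQ hxp c)
    refine ⟨G, ⟨hG, ?_⟩, hxG⟩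
    rintro rfl
    exact hxG₀ ((G.add_mem_iff_left (G.smul_mem c hp)).1 hxG)

theorem lemma_aux_iii {F : Type*} [Field F] [Fintype F] (e r : ℕ)
    (he : e = 0 ∨ e = 1 ∨ e = 2) (hr : 0 < r) (hmod : r % 2 = (e + 1) % 2)
    (V : Type*) [AddCommGroup V] [Module F V] [FiniteDimensional F V]
    (hdim : Module.finrank F V = r + 3)
    (Q : QuadraticForm F V) (hQnd : QuadNondeg Q)
    (hdef : Module.finrank F V = 2 * wittIndex Q + e)
    (S : Set (Submodule F V)) (hS : IsSpread Q S)
    (G₀ : Submodule F V) (hG₀ : G₀ ∈ S)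
    (p : V) (hp : p ∈ G₀) (hp0 : p ≠ 0)
    (H : Submodule F V) (hH : H ≤ vecPerp Q p)
    (hHdim : Module.finrank F ↥H = r + 1) (hpH : p ∉ H)
    (x : V) (hx0 : x ≠ 0) (hxQ : Q x = 0) (hxH : x ∈ H) (hxG₀ : x ∉ G₀) :
    {G : Submodule F V | G ∈ S ∧ G ≠ G₀ ∧ x ∈ (Submodule.span F {p} ⊔ G) ⊓ H}.ncard =
      Fintype.card F := by
  calc
    _ = {G ∈ S \ {G₀} | x ∈ span F {p} ⊔ G}.ncard := by simp [hxH, and_assoc]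
    _ = (ENat.card F).toNat := congrArg ENat.toNat <|
      lemma_aux_iii_general hS.pairwiseDisjoint hS.2.2 hG₀ hp hp0 ((hS.1 G₀ hG₀).1 p hp) hxQ
        (mem_vecPerp_iff_isOrtho.1 (hH hxH)).symm hxG₀
    _ = Fintype.card F := by rw [ENat.card_eq_coe_fintype_card, ENat.toNat_natCast]
end

section
/- Let e ∈ {0,1,2} and let r be a positive integer with r ≡ e+1 (mod 2). Suppose there exist an F-vector space U of dimension r+2, a hyperplane H of U, a nondegenerate quadratic form Q on H of Witt defect e, a generator Π of Q, and a hyperbolic, parabolic or elliptic avsp for (U, H, Q, Π) (according as e = 0, 1 or 2). Then there exist an F-vector space V of dimension r+3 and a nondegenerate quadratic form Q' on V of Witt defect e that admits a spread. -/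
open Module Submodule

/-!
Identify `U` with `H × F`, the hyperplane `H` being the zero set of the last coordinate, and embed
`H` in `V = H × F × F` with the form `Q' (x, a, b) = Q x + a * b`. Projection from the singular
point `(0, 0, 1)` is a bijection from the singular points of `Q'` not perpendicular to it onto the
affine points of `U`, the point over `(x, 1)` being `(x, 1, -Q x)`. Over the affine points of a
member of the avsp these span a generator of `Q'`; together with the cone with vertex `(0, 0, 1)`
over the given generator of `Q`, this yields `q ^ (w + e) + 1` generators of `Q'`, where `w` is the
Witt index of `Q`.

A nonzero vector common to the lifts of two members would come from a vector of `H` in their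
intersection, orthogonal to the trace on `H` of their sum; condition (3) of an avsp excludes this.
Finally, counting singular vectors in the cosets of a generator of `Q'` shows that so many pairwise
disjoint generators must contain all of them.
-/

section WittIndex

variable {F V : Type*} [Field F] [AddCommGroup V] [Module F V] {Q : QuadraticForm F V}

lemma isTotallySingular_bot : IsTotallySingular Q ⊥ := by
  rintro x rfl
  exact Q.map_zero

lemma isTotallySingular_span_singleton {v : V} (hv : Q v = 0) : IsTotallySingular Q (F ∙ v) := by
  intro x hx
  obtain ⟨c, rfl⟩ := mem_span_singleton.1 hx
  rw [Q.map_smul, hv, smul_zero]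

lemma mem_subPerp {W : Submodule F V} {v : V} :
    v ∈ subPerp Q W ↔ ∀ w ∈ W, QuadraticMap.polar Q w v = 0 := by
  simp [subPerp, vecPerp]

lemma IsTotallySingular.polar_eq_zero {W : Submodule F V} (hW : IsTotallySingular Q W) {x y : V}
    (hx : x ∈ W) (hy : y ∈ W) : QuadraticMap.polar Q x y = 0 := by
  simp [QuadraticMap.polar, hW _ hx, hW _ hy, hW _ (W.add_mem hx hy)]

lemma IsTotallySingular.sup {W W' : Submodule F V} (hW : IsTotallySingular Q W)
    (hW' : IsTotallySingular Q W') (hperp : W' ≤ subPerp Q W) : IsTotallySingular Q (W ⊔ W') := by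
  intro x hx
  obtain ⟨w, hw, w', hw', rfl⟩ := mem_sup.1 hx
  rw [QuadraticMap.map_add Q, hW w hw, hW' w' hw', mem_subPerp.1 (hperp hw') w hw, add_zero,
    add_zero]

lemma wittIndex_le {n : ℕ} (h : ∀ W, IsTotallySingular Q W → finrank F W ≤ n) :
    wittIndex Q ≤ n := by
  refine csSup_le ⟨_, ⊥, isTotallySingular_bot, rfl⟩ ?_
  rintro _ ⟨W, hW, rfl⟩
  exact h W hW

variable [FiniteDimensional F V]

lemma bddAbove_finrank_isTotallySingular (Q : QuadraticForm F V) :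
    BddAbove {n : ℕ | ∃ W : Submodule F V, IsTotallySingular Q W ∧ finrank F W = n} := by
  refine ⟨finrank F V, ?_⟩
  rintro _ ⟨W, -, rfl⟩
  exact W.finrank_le

lemma IsTotallySingular.finrank_le_wittIndex {W : Submodule F V} (hW : IsTotallySingular Q W) :
    finrank F W ≤ wittIndex Q :=
  le_csSup (bddAbove_finrank_isTotallySingular Q) ⟨W, hW, rfl⟩

lemma exists_isGenerator (Q : QuadraticForm F V) : ∃ G, IsGenerator Q G :=
  Nat.sSup_mem (s := {n | ∃ W, IsTotallySingular Q W ∧ finrank F W = n})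
    ⟨_, ⊥, isTotallySingular_bot, rfl⟩ (bddAbove_finrank_isTotallySingular Q)

lemma IsGenerator.mem_of_mem_subPerp {G : Submodule F V} (hG : IsGenerator Q G) {v : V}
    (hv : Q v = 0) (hperp : v ∈ subPerp Q G) : v ∈ G := by
  have hsup : IsTotallySingular Q (G ⊔ F ∙ v) :=
    hG.1.sup (isTotallySingular_span_singleton hv) ((span_singleton_le_iff_mem _ _).2 hperp)
  have hle : finrank F ↥(G ⊔ F ∙ v) ≤ finrank F G := hG.2 ▸ hsup.finrank_le_wittIndex
  rw [eq_of_le_of_finrank_le le_sup_left hle]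
  exact mem_sup_right (mem_span_singleton_self v)

lemma finrank_le_finrank_inf_subPerp_add (Q : QuadraticForm F V) (W G : Submodule F V) :
    finrank F W ≤ finrank F ↥(W ⊓ subPerp Q G) + finrank F G := by
  let φ : W →ₗ[F] Dual F G := G.subtype.dualMap ∘ₗ QuadraticMap.polarBilin Q ∘ₗ W.subtype
  have hker : (LinearMap.ker φ).map W.subtype = W ⊓ subPerp Q G := by
    ext v
    simp [φ, LinearMap.ext_iff, mem_subPerp, QuadraticMap.polar_comm Q v, and_comm]
  rw [← hker, finrank_map_subtype_eq, ← φ.finrank_range_add_finrank_ker, add_comm,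
    ← Subspace.dual_finrank_eq (V := G)]
  gcongr
  exact (LinearMap.range φ).finrank_le

lemma IsTotallySingular.exists_mem_finrank_le {W : Submodule F V} (hW : IsTotallySingular Q W)
    {u : V} (hu : Q u = 0) :
    ∃ W', IsTotallySingular Q W' ∧ u ∈ W' ∧ finrank F W ≤ finrank F W' := by
  by_cases huW : u ∈ W
  · exact ⟨W, hW, huW, le_rfl⟩
  have hts : IsTotallySingular Q (W ⊓ subPerp Q (F ∙ u)) := fun x hx => hW x hx.1
  refine ⟨W ⊓ subPerp Q (F ∙ u) ⊔ F ∙ u, ?_, mem_sup_right (mem_span_singleton_self u), ?_⟩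
  · rw [sup_comm]
    exact (isTotallySingular_span_singleton hu).sup hts inf_le_right
  · have hu0 : u ≠ 0 := fun h => huW (h ▸ W.zero_mem)
    rw [finrank_sup_span_singleton fun h => huW (mem_inf.1 h).1,
      ← finrank_span_singleton (K := F) hu0]
    exact finrank_le_finrank_inf_subPerp_add Q W (F ∙ u)

end WittIndex

section Isometry

variable {F V V' : Type*} [Field F] [AddCommGroup V] [Module F V] [AddCommGroup V'] [Module F V']
  {Q : QuadraticForm F V} {Q' : QuadraticForm F V'}

lemma QuadNondeg.of_isometryEquiv (hQ : QuadNondeg Q) (φ : Q'.IsometryEquiv Q) :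
    QuadNondeg Q' := by
  intro v hv hpolar
  refine φ.toLinearEquiv.map_eq_zero_iff.1 (hQ (φ v) (by rwa [φ.map_app]) fun x => ?_)
  have := hpolar (φ.symm x)
  rwa [QuadraticMap.polar, ← φ.map_app, ← φ.map_app v, ← φ.map_app (φ.symm x), map_add,
    φ.apply_symm_apply] at this

lemma IsTotallySingular.comap (φ : Q'.IsometryEquiv Q) {W : Submodule F V}
    (hW : IsTotallySingular Q W) : IsTotallySingular Q' (W.comap (φ.toLinearEquiv : V' →ₗ[F] V)) :=
  fun x hx => by rw [← φ.map_app]; exact hW _ hx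

lemma finrank_comap_linearEquiv (φ : V' ≃ₗ[F] V) (W : Submodule F V) :
    finrank F (W.comap (φ : V' →ₗ[F] V)) = finrank F W :=
  (φ.ofSubmodule' W).finrank_eq

lemma wittIndex_eq_of_isometryEquiv [FiniteDimensional F V] [FiniteDimensional F V']
    (φ : Q'.IsometryEquiv Q) : wittIndex Q' = wittIndex Q := by
  refine le_antisymm (wittIndex_le fun W hW => ?_) (wittIndex_le fun W hW => ?_)
  · rw [← finrank_comap_linearEquiv φ.symm.toLinearEquiv]
    exact (hW.comap φ.symm).finrank_le_wittIndex
  · rw [← finrank_comap_linearEquiv φ.toLinearEquiv]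
    exact (hW.comap φ).finrank_le_wittIndex

lemma IsSpread.comap [FiniteDimensional F V] [FiniteDimensional F V'] {S : Set (Submodule F V)}
    (hS : IsSpread Q S) (φ : Q'.IsometryEquiv Q) :
    IsSpread Q' (Submodule.comap (φ.toLinearEquiv : V' →ₗ[F] V) '' S) := by
  obtain ⟨hgen, hdisj, hcover⟩ := hS
  refine ⟨?_, ?_, fun v hv => ?_⟩
  · rintro _ ⟨G, hG, rfl⟩
    refine ⟨(hgen G hG).1.comap φ, ?_⟩
    rw [finrank_comap_linearEquiv, (hgen G hG).2, wittIndex_eq_of_isometryEquiv φ]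
  · rintro _ ⟨G, hG, rfl⟩ _ ⟨G', hG', rfl⟩ hne
    rw [← comap_inf, hdisj G hG G' hG' fun h => hne (h ▸ rfl), comap_bot]
    exact φ.toLinearEquiv.ker
  · obtain ⟨G, hG, hvG⟩ := hcover (φ v) (by rwa [φ.map_app])
    exact ⟨_, ⟨G, hG, rfl⟩, hvG⟩

end Isometry

section Counting

variable {F V : Type*} [Field F] [AddCommGroup V] [Module F V] [FiniteDimensional F V]
  {Q : QuadraticForm F V}

lemma natCard_mul_natCard_fiber {f : Dual F V} (hf : f ≠ 0) (c : F) :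
    Nat.card F * Nat.card {x // f x = c} = Nat.card V := by
  have e : {x // f x = c} ≃ LinearMap.ker f :=
    AddMonoidHom.fiberEquivKerOfSurjective (f := f.toAddMonoidHom) (LinearMap.surjective hf) c
  rw [Nat.card_congr e, natCard_eq_pow_finrank (K := F) (V := LinearMap.ker f),
    natCard_eq_pow_finrank (K := F) (V := V), ← Dual.finrank_ker_add_one_of_ne_zero hf, pow_succ']

lemma IsTotallySingular.natCard_mul_natCard_singular_coset {G : Submodule F V}
    (hG : IsTotallySingular Q G) {v : V} (hv : v ∉ subPerp Q G) :
    Nat.card F * Nat.card {p : G // Q (v + p) = 0} = Nat.card G := by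
  let f : Dual F G := QuadraticMap.polarBilin Q v ∘ₗ G.subtype
  have hf : f ≠ 0 := fun h => hv <| mem_subPerp.2 fun p hp => by
    rw [QuadraticMap.polar_comm]
    exact LinearMap.congr_fun h ⟨p, hp⟩
  have hQ : ∀ p : G, Q (v + p) = 0 ↔ f p = -Q v := fun p => by
    simp [f, QuadraticMap.map_add Q, hG _ p.2, eq_neg_iff_add_eq_zero,
      add_comm (QuadraticMap.polar Q v p)]
  rw [Nat.card_congr (Equiv.subtypeEquivRight hQ), natCard_mul_natCard_fiber hf]

lemma IsGenerator.ne_zero_of_mem_subPerp {G : Submodule F V} (hG : IsGenerator Q G) {v : V}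
    (hv : v ∈ subPerp Q G) (hvG : v ∉ G) {p : V} (hp : p ∈ G) : Q (v + p) ≠ 0 := by
  intro h
  refine hvG (hG.mem_of_mem_subPerp ?_ hv)
  rwa [QuadraticMap.map_add Q, hG.1 p hp, QuadraticMap.polar_comm, mem_subPerp.1 hv p hp, add_zero,
    add_zero] at h

open Classical in
/- A coset of `G` outside `G^⊥` carries `|G| / q` singular vectors; a coset inside `G^⊥` carries
none, unless it is `G` itself. -/
lemma IsGenerator.natCard_singular_coset_add_le {G : Submodule F V} (hG : IsGenerator Q G) {v : V}
    (hv : v ∈ G → v = 0) :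
    Nat.card F * Nat.card {p : G // Q (v + p) = 0} + (if v ∈ subPerp Q G then Nat.card G else 0) ≤
      (if v = 0 then Nat.card F * Nat.card G else 0) + Nat.card G := by
  by_cases hperp : v ∈ subPerp Q G
  · obtain rfl | hv0 := eq_or_ne v 0
    · simp [hG.1 _ (Subtype.prop _)]
    · have : IsEmpty {p : G // Q (v + p) = 0} :=
        ⟨fun p => hG.ne_zero_of_mem_subPerp hperp (mt hv hv0) p.1.2 p.2⟩
      simp [hperp]
  · simp [hperp, hG.1.natCard_mul_natCard_singular_coset hperp]

variable [Finite F]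

lemma natCard_singular_eq_sum {C G : Submodule F V} [Fintype C] (hCG : IsCompl C G) :
    Nat.card {v // Q v = 0} = ∑ c : C, Nat.card {p : G // Q (c + p) = 0} := by
  have : Finite V := Module.finite_of_finite F
  rw [← Nat.card_sigma]
  exact Nat.card_congr <|
    ((prodEquivOfIsCompl C G hCG).toEquiv.subtypeEquiv fun _ => Iff.rfl).symm.trans
      (Equiv.subtypeProdEquivSigmaSubtype fun (c : C) (p : G) => Q (c + p) = 0)

lemma natCard_singular_le {e : ℕ} (hV : finrank F V = 2 * wittIndex Q + e) :
    Nat.card F * Nat.card {v // Q v = 0} + Nat.card F ^ (wittIndex Q + e) ≤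
      Nat.card F ^ (wittIndex Q + 1) + Nat.card F ^ (2 * wittIndex Q + e) := by
  classical
  have : Finite V := Module.finite_of_finite F
  obtain ⟨G, hG⟩ := exists_isGenerator Q
  obtain ⟨C, hGC⟩ := G.exists_isCompl
  have := Fintype.ofFinite C
  set q := Nat.card F
  set w := wittIndex Q
  have hcardG : Nat.card G = q ^ w := by rw [natCard_eq_pow_finrank (K := F), hG.2]
  have hfinC : finrank F C = w + e := by
    have := finrank_add_eq_of_isCompl hGC
    rw [hG.2] at this
    omega
  have hcardC : Fintype.card C = q ^ (w + e) := by
    rw [← Nat.card_eq_fintype_card, natCard_eq_pow_finrank (K := F), hfinC]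
  have hperp : q ^ e ≤ Fintype.card {c : C // (c : V) ∈ subPerp Q G} := by
    have hle := finrank_le_finrank_inf_subPerp_add Q C G
    rw [hfinC, hG.2] at hle
    rw [← Nat.card_eq_fintype_card, Nat.card_congr (Equiv.subtypeSubtypeEquivSubtypeInter _ _)]
    change _ ≤ Nat.card ↥(C ⊓ subPerp Q G)
    rw [natCard_eq_pow_finrank (K := F)]
    exact Nat.pow_le_pow_right Nat.card_pos (by omega)
  have hsum := Finset.sum_le_sum fun (c : C) (_ : c ∈ Finset.univ) =>
    hG.natCard_singular_coset_add_le fun hcG => disjoint_def.1 hGC.disjoint c hcG c.2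
  simp only [Finset.sum_add_distrib, ← Finset.mul_sum, ← natCard_singular_eq_sum hGC.symm,
    ← Finset.sum_filter, Finset.sum_const, ← Fintype.card_subtype, Finset.card_univ, smul_eq_mul,
    ZeroMemClass.coe_eq_zero, Fintype.card_unique, hcardG, hcardC, one_mul] at hsum
  calc q * Nat.card {v // Q v = 0} + q ^ (w + e)
      = q * Nat.card {v // Q v = 0} + q ^ e * q ^ w := by ring
    _ ≤ q * Nat.card {v // Q v = 0} + Fintype.card {c : C // (c : V) ∈ subPerp Q G} * q ^ w := by
      gcongr
    _ ≤ q * q ^ w + q ^ (w + e) * q ^ w := hsum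
    _ = q ^ (w + 1) + q ^ (2 * w + e) := by ring

lemma ncard_sdiff_zero_add_one (W : Submodule F V) :
    ((W : Set V) \ {0}).ncard + 1 = Nat.card F ^ finrank F W := by
  have : Finite V := Module.finite_of_finite F
  rw [Set.ncard_sdiff_singleton_add_one W.zero_mem, ← Nat.card_coe_set_eq]
  exact natCard_eq_pow_finrank

lemma iUnion_sdiff_zero_eq_of_natCard {e : ℕ} (hV : finrank F V = 2 * wittIndex Q + e) {ι : Type*}
    [Finite ι] {G : ι → Submodule F V} (hG : ∀ i, IsGenerator Q (G i))
    (hdisj : Pairwise fun i j => Disjoint (G i) (G j))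
    (hcard : Nat.card F * Nat.card ι = Nat.card F ^ (wittIndex Q + e) + Nat.card F) :
    ⋃ i, (G i : Set V) \ {0} = {v | Q v = 0} \ {0} := by
  have : Finite V := Module.finite_of_finite F
  set q := Nat.card F
  set w := wittIndex Q
  obtain ⟨m, hm⟩ : ∃ m, q ^ w = m + 1 := Nat.exists_eq_add_one.2 (pow_pos Nat.card_pos w)
  have hpart : ∀ i, ((G i : Set V) \ {0}).ncard = m := fun i => by
    rw [← add_left_inj 1, ncard_sdiff_zero_add_one, (hG i).2, hm]
  have hunion : (⋃ i, (G i : Set V) \ {0}).ncard = Nat.card ι * m := by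
    have := Fintype.ofFinite ι
    rw [Set.ncard_iUnion_of_finite (fun _ => Set.toFinite _), finsum_eq_sum_of_fintype]
    · simp [hpart]
    · refine fun i j hij => Set.disjoint_left.2 ?_
      exact fun x hxi hxj => hxi.2 (disjoint_def.1 (hdisj hij) x hxi.1 hxj.1)
  have hsingular : ({v | Q v = 0} \ {0}).ncard + 1 = Nat.card {v // Q v = 0} :=
    Set.ncard_sdiff_singleton_add_one (s := {v | Q v = 0}) (QuadraticMap.map_zero Q)
  refine Set.eq_of_subset_of_ncard_le ?_ ?_
  · exact Set.iUnion_subset fun i => Set.sdiff_subset_sdiff_left (hG i).1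
  · rw [hunion]
    have hle := natCard_singular_le hV
    refine Nat.le_of_mul_le_mul_left (c := q) ?_ Nat.card_pos
    have hpow : q ^ (2 * w + e) = q ^ (w + e) * q ^ w := by ring
    rw [← hsingular, pow_succ', hpow, hm] at hle
    rw [← mul_assoc, hcard]
    linarith

theorem isSpread_range_of_natCard {e : ℕ} (hV : finrank F V = 2 * wittIndex Q + e) {ι : Type*}
    [Finite ι] {G : ι → Submodule F V} (hG : ∀ i, IsGenerator Q (G i))
    (hdisj : Pairwise fun i j => Disjoint (G i) (G j))
    (hcard : Nat.card F * Nat.card ι = Nat.card F ^ (wittIndex Q + e) + Nat.card F) :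
    IsSpread Q (Set.range G) := by
  have : Nonempty ι := by
    have : 0 < Nat.card F * Nat.card ι := hcard ▸ Nat.add_pos_right _ Nat.card_pos
    exact (Nat.card_pos_iff.1 (Nat.pos_of_mul_pos_left this)).1
  refine ⟨?_, ?_, fun v hv => ?_⟩
  · rintro _ ⟨i, rfl⟩
    exact hG i
  · rintro _ ⟨i, rfl⟩ _ ⟨j, rfl⟩ hij
    exact (hdisj (ne_of_apply_ne G hij)).eq_bot
  · obtain rfl | hv0 := eq_or_ne v 0
    · exact ⟨_, ⟨Classical.arbitrary ι, rfl⟩, zero_mem _⟩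
    · have hcover := iUnion_sdiff_zero_eq_of_natCard hV hG hdisj hcard
      obtain ⟨i, hvi, -⟩ := Set.mem_iUnion.1 (hcover.ge ⟨hv, hv0⟩)
      exact ⟨_, ⟨i, rfl⟩, hvi⟩

end Counting

section HyperbolicSum

variable {F V : Type*} [Field F] [AddCommGroup V] [Module F V] {Q : QuadraticForm F V}

/-- The orthogonal sum of `Q` with a hyperbolic plane, `(v, a, b) ↦ Q v + a * b`. -/
def addHyperbolic (Q : QuadraticForm F V) : QuadraticForm F (V × F × F) :=
  Q.prod (QuadraticMap.linMulLin (LinearMap.fst F F F) (LinearMap.snd F F F))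

@[simp]
lemma addHyperbolic_apply (Q : QuadraticForm F V) (x : V × F × F) :
    addHyperbolic Q x = Q x.1 + x.2.1 * x.2.2 := by
  simp [addHyperbolic]

lemma polar_addHyperbolic (Q : QuadraticForm F V) (x y : V × F × F) :
    QuadraticMap.polar (addHyperbolic Q) x y =
      QuadraticMap.polar Q x.1 y.1 + (x.2.1 * y.2.2 + x.2.2 * y.2.1) := by
  simp only [QuadraticMap.polar, addHyperbolic_apply, Prod.fst_add, Prod.snd_add]
  ring

lemma quadNondeg_addHyperbolic (hQ : QuadNondeg Q) : QuadNondeg (addHyperbolic Q) := by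
  rintro ⟨v, a, b⟩ hv hpolar
  simp only [polar_addHyperbolic] at hpolar
  obtain rfl : b = 0 := by simpa using hpolar (0, 1, 0)
  obtain rfl : a = 0 := by simpa using hpolar (0, 0, 1)
  obtain rfl : v = 0 := hQ v (by simpa using hv) fun x => by simpa using hpolar (x, 0, 0)
  rfl

/-- The cone over a subspace `G` of `V` with vertex the singular vector `(0, 0, 1)` of
`addHyperbolic Q`. -/
def hyperbolicCone (G : Submodule F V) : Submodule F (V × F × F) :=
  G.prod (LinearMap.range (LinearMap.inr F F F))

lemma mem_hyperbolicCone {G : Submodule F V} {x : V × F × F} :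
    x ∈ hyperbolicCone G ↔ x.1 ∈ G ∧ x.2.1 = 0 := by
  simp [hyperbolicCone, Prod.ext_iff, eq_comm]

lemma finrank_hyperbolicCone [FiniteDimensional F V] (G : Submodule F V) :
    finrank F (hyperbolicCone G) = finrank F G + 1 := by
  have hrange : hyperbolicCone G = LinearMap.range (G.subtype.prodMap (LinearMap.inr F F F)) := by
    rw [LinearMap.range_prodMap, range_subtype, hyperbolicCone]
  have hinj : Function.Injective (G.subtype.prodMap (LinearMap.inr F F F)) :=
    G.injective_subtype.prodMap LinearMap.inr_injective
  rw [hrange, LinearMap.finrank_range_of_inj hinj, finrank_prod, finrank_self]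

lemma isTotallySingular_hyperbolicCone {G : Submodule F V} (hG : IsTotallySingular Q G) :
    IsTotallySingular (addHyperbolic Q) (hyperbolicCone G) := by
  intro x hx
  rw [mem_hyperbolicCone] at hx
  simp [hG _ hx.1, hx.2]

lemma IsTotallySingular.exists_le_hyperbolicCone {W : Submodule F (V × F × F)}
    (hW : IsTotallySingular (addHyperbolic Q) W) (hvertex : (0, 0, 1) ∈ W) :
    ∃ G, IsTotallySingular Q G ∧ W ≤ hyperbolicCone G := by
  have hfst : ∀ x ∈ W, x.2.1 = 0 := fun x hx => by
    simpa [polar_addHyperbolic] using hW.polar_eq_zero hx hvertex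
  refine ⟨W.map (LinearMap.fst F V (F × F)), ?_, fun x hx => ?_⟩
  · rintro _ ⟨x, hx, rfl⟩
    simpa [hfst x hx] using hW x hx
  · exact mem_hyperbolicCone.2 ⟨mem_map_of_mem hx, hfst x hx⟩

variable [FiniteDimensional F V]

lemma wittIndex_addHyperbolic (Q : QuadraticForm F V) :
    wittIndex (addHyperbolic Q) = wittIndex Q + 1 := by
  refine le_antisymm (wittIndex_le fun W hW => ?_) ?_
  · obtain ⟨W', hW', hvertex, hle⟩ := hW.exists_mem_finrank_le (u := (0, 0, 1)) (by simp)
    obtain ⟨G, hG, hWG⟩ := hW'.exists_le_hyperbolicCone hvertex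
    calc finrank F W ≤ finrank F (hyperbolicCone G) := hle.trans (finrank_mono hWG)
      _ = finrank F G + 1 := finrank_hyperbolicCone G
      _ ≤ wittIndex Q + 1 := by gcongr; exact hG.finrank_le_wittIndex
  · obtain ⟨G, hG⟩ := exists_isGenerator Q
    rw [← hG.2, ← finrank_hyperbolicCone]
    exact (isTotallySingular_hyperbolicCone hG.1).finrank_le_wittIndex

lemma isGenerator_hyperbolicCone {G : Submodule F V} (hG : IsGenerator Q G) :
    IsGenerator (addHyperbolic Q) (hyperbolicCone G) :=
  ⟨isTotallySingular_hyperbolicCone hG.1, by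
    rw [finrank_hyperbolicCone, hG.2, wittIndex_addHyperbolic]⟩

end HyperbolicSum

section QuadricLift

variable {F V : Type*} [Field F] [AddCommGroup V] [Module F V] {Q : QuadraticForm F V}
  {T T' : Submodule F (V × F)} {h h' : V}

/-- The linear map `V × F → V × F × F` lifting to the quadric `addHyperbolic Q` those subspaces of
`V × F` that contain `(h, 1)` and meet the hyperplane `V × 0` in a totally singular subspace: on
their vectors of the form `(x, 1)` it is `(x, 1) ↦ (x, 1, -Q x)`. -/
def quadricLift (Q : QuadraticForm F V) (h : V) : V × F →ₗ[F] V × F × F :=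
  (LinearMap.fst F V F).prod ((LinearMap.snd F V F).prod
    (Q h • LinearMap.snd F V F - QuadraticMap.polarBilin Q h ∘ₗ LinearMap.fst F V F))

lemma quadricLift_apply (x : V × F) :
    quadricLift Q h x = (x.1, x.2, Q h * x.2 - QuadraticMap.polar Q h x.1) := rfl

lemma quadricLift_injective : Function.Injective (quadricLift Q h) := fun x y hxy => by
  simp only [quadricLift_apply, Prod.mk.injEq] at hxy
  exact Prod.ext hxy.1 hxy.2.1

lemma IsTotallySingular.map_quadricLift (hT : IsTotallySingular Q (T.comap (LinearMap.inl F V F)))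
    (hh : (h, 1) ∈ T) : IsTotallySingular (addHyperbolic Q) (T.map (quadricLift Q h)) := by
  rintro _ ⟨⟨x, a⟩, hx, rfl⟩
  have hmem : x - a • h ∈ T.comap (LinearMap.inl F V F) := by
    simpa using T.sub_mem hx (T.smul_mem a hh)
  have hsub := hT _ hmem
  rw [sub_eq_add_neg, QuadraticMap.map_add Q, QuadraticMap.map_neg, QuadraticMap.map_smul,
    QuadraticMap.polar_neg_right, QuadraticMap.polar_smul_right, QuadraticMap.polar_comm,
    smul_eq_mul, smul_eq_mul] at hsub
  rw [addHyperbolic_apply, quadricLift_apply]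
  linear_combination hsub

lemma IsTotallySingular.polar_eq_mul_polar
    (hT : IsTotallySingular Q (T.comap (LinearMap.inl F V F))) (hh : (h, 1) ∈ T) {x v : V} {a : F}
    (hx : (x, 0) ∈ T) (hv : (v, a) ∈ T) :
    QuadraticMap.polar Q x v = a * QuadraticMap.polar Q h x := by
  have := (hT.map_quadricLift hh).polar_eq_zero (mem_map_of_mem hx) (mem_map_of_mem hv)
  simp only [polar_addHyperbolic, quadricLift_apply] at this
  linear_combination this

/- A common vector `(x, 0)` of `T` and `T'` whose two lifts agree is orthogonal to `(T ⊔ T') ∩ V`: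
on `T` and on `T'`, its polar form with `(v, a)` is the same multiple of `a`. -/
lemma disjoint_map_quadricLift (hT : IsTotallySingular Q (T.comap (LinearMap.inl F V F)))
    (hT' : IsTotallySingular Q (T'.comap (LinearMap.inl F V F)))
    (hh : (h, 1) ∈ T) (hh' : (h', 1) ∈ T') (hinf : ∀ x ∈ T ⊓ T', x.2 = 0)
    (hnondeg : T ⊓ T' ≠ ⊥ →
      QuadNondeg (Q.comp ((T ⊔ T').comap (LinearMap.inl F V F)).subtype)) :
    Disjoint (T.map (quadricLift Q h)) (T'.map (quadricLift Q h')) := by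
  rw [disjoint_def]
  rintro _ ⟨⟨x, a⟩, hx, rfl⟩ ⟨⟨y, b⟩, hy, hxy⟩
  simp only [quadricLift_apply, Prod.mk.injEq] at hxy
  obtain ⟨rfl, rfl, hlast⟩ := hxy
  obtain rfl : b = 0 := hinf _ ⟨hx, hy⟩
  have hpolar : QuadraticMap.polar Q h' y = QuadraticMap.polar Q h y := by simpa using hlast
  suffices y = 0 by rw [this]; exact map_zero _
  by_contra hy0
  have hne : T ⊓ T' ≠ ⊥ := (Submodule.ne_bot_iff _).2 ⟨(y, 0), ⟨hx, hy⟩, by simpa using hy0⟩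
  refine hy0 (congrArg Subtype.val (hnondeg hne ⟨y, mem_sup_left hx⟩ (hT y hx) ?_))
  rintro ⟨v, hv⟩
  obtain ⟨⟨v₁, a₁⟩, h₁, ⟨v₂, a₂⟩, h₂, hsum⟩ := mem_sup.1 hv
  obtain ⟨rfl, ha⟩ : v₁ + v₂ = v ∧ a₁ + a₂ = 0 := by simpa using hsum
  change QuadraticMap.polar Q y (v₁ + v₂) = 0
  rw [QuadraticMap.polar_add_right, hT.polar_eq_mul_polar hh hx h₁,
    hT'.polar_eq_mul_polar hh' hy h₂, hpolar, ← add_mul, ha, zero_mul]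

lemma disjoint_hyperbolicCone_map_quadricLift {G : Submodule F V}
    (hG : Disjoint (T.comap (LinearMap.inl F V F)) G) :
    Disjoint (hyperbolicCone G) (T.map (quadricLift Q h)) := by
  rw [disjoint_def]
  rintro _ hcone ⟨⟨x, a⟩, hx, rfl⟩
  obtain ⟨hxG, rfl⟩ := mem_hyperbolicCone.1 hcone
  obtain rfl : x = 0 := disjoint_def.1 hG x hx hxG
  exact map_zero _

lemma isGenerator_map_quadricLift [FiniteDimensional F V]
    (hT : IsTotallySingular Q (T.comap (LinearMap.inl F V F))) (hh : (h, 1) ∈ T)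
    (hfin : finrank F T = wittIndex Q + 1) :
    IsGenerator (addHyperbolic Q) (T.map (quadricLift Q h)) := by
  refine ⟨hT.map_quadricLift hh, ?_⟩
  rw [wittIndex_addHyperbolic, ← hfin]
  exact (equivMapOfInjective _ quadricLift_injective T).finrank_eq.symm

theorem isSpread_range_hyperbolicCone_quadricLift [Finite F] [FiniteDimensional F V] {e : ℕ}
    (hV : finrank F V = 2 * wittIndex Q + e) {G : Submodule F V} (hG : IsGenerator Q G)
    {ι : Type*} [Finite ι] (hcard : Nat.card ι = Nat.card F ^ (wittIndex Q + e))
    {T : ι → Submodule F (V × F)} {h : ι → V} (hh : ∀ i, (h i, 1) ∈ T i)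
    (hfin : ∀ i, finrank F (T i) = wittIndex Q + 1)
    (hT : ∀ i, IsTotallySingular Q ((T i).comap (LinearMap.inl F V F)))
    (hTG : ∀ i, Disjoint ((T i).comap (LinearMap.inl F V F)) G)
    (hinf : Pairwise fun i j => ∀ x ∈ T i ⊓ T j, x.2 = 0)
    (hnondeg : Pairwise fun i j => T i ⊓ T j ≠ ⊥ →
      QuadNondeg (Q.comp ((T i ⊔ T j).comap (LinearMap.inl F V F)).subtype)) :
    IsSpread (addHyperbolic Q) (Set.range fun i : Option ι =>
      i.elim (hyperbolicCone G) fun i => (T i).map (quadricLift Q (h i))) := by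
  refine isSpread_range_of_natCard (e := e) ?_ ?_ ?_ ?_
  · simp only [finrank_prod, finrank_self, hV, wittIndex_addHyperbolic]
    ring
  · rintro (_ | i)
    · exact isGenerator_hyperbolicCone hG
    · exact isGenerator_map_quadricLift (hT i) (hh i) (hfin i)
  · rintro (_ | i) (_ | j) hij
    · exact absurd rfl hij
    · exact disjoint_hyperbolicCone_map_quadricLift (hTG j)
    · exact (disjoint_hyperbolicCone_map_quadricLift (hTG i)).symm
    · have hij' : i ≠ j := fun h => hij (congrArg some h)
      exact disjoint_map_quadricLift (hT i) (hT j) (hh i) (hh j) (hinf hij') (hnondeg hij')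
  · rw [Finite.card_option, hcard, wittIndex_addHyperbolic]
    ring

end QuadricLift

section Avsp

variable {F U : Type*} [Field F] [AddCommGroup U] [Module F U] {H : Submodule F U}

lemma exists_linearEquiv_prod_of_finrank_eq_add_one [FiniteDimensional F U]
    (hH : finrank F U = finrank F H + 1) : ∃ E : U ≃ₗ[F] H × F, ∀ x : H, E x = (x, 0) := by
  obtain ⟨K, hHK⟩ := H.exists_isCompl
  have hK : finrank F K = finrank F F := by
    have := finrank_add_eq_of_isCompl hHK
    rw [finrank_self]
    omega
  refine ⟨(prodEquivOfIsCompl H K hHK).symm ≪≫ₗ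
    (LinearEquiv.refl F H).prodCongr (LinearEquiv.ofFinrankEq K F hK), fun x => ?_⟩
  simp

variable {E : U ≃ₗ[F] H × F}

lemma comap_inl_map_eq_comap_subtype (hE : ∀ x : H, E x = (x, 0)) (S : Submodule F U) :
    (S.map (E : U →ₗ[F] H × F)).comap (LinearMap.inl F H F) = S.comap H.subtype := by
  ext x
  simp [← hE]

lemma snd_eq_zero_iff_mem (hE : ∀ x : H, E x = (x, 0)) {x : U} : (E x).2 = 0 ↔ x ∈ H := by
  refine ⟨fun hx => ?_, fun hx => by rw [hE ⟨x, hx⟩]⟩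
  have : x = (E x).1 := E.injective (by rw [hE]; exact Prod.ext rfl hx)
  exact this ▸ (E x).1.2

lemma exists_prod_one_mem_map (hE : ∀ x : H, E x = (x, 0)) {S : Submodule F U} (hS : ¬ S ≤ H) :
    ∃ h : H, (h, 1) ∈ S.map (E : U →ₗ[F] H × F) := by
  obtain ⟨s, hs, hsH⟩ := SetLike.not_le_iff_exists.1 hS
  have ha : (E s).2 ≠ 0 := mt (snd_eq_zero_iff_mem hE).1 hsH
  refine ⟨(E s).2⁻¹ • (E s).1, (E s).2⁻¹ • s, S.smul_mem _ hs, ?_⟩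
  exact (map_smul E _ s).trans (Prod.ext rfl (inv_mul_cancel₀ ha))

variable [Fintype F] {e r : ℕ} {Q : QuadraticForm F H} {G : Submodule F H}
  {P : Set (Submodule F U)} {S T : Submodule F U}

lemma IsAvsp.inf_le (hP : IsAvsp e r H Q G P) (hS : S ∈ P) (hT : T ∈ P) (hST : S ≠ T) :
    S ⊓ T ≤ H := by
  intro x hx
  by_contra hxH
  have hx0 : x ≠ 0 := fun h => hxH (h ▸ H.zero_mem)
  refine hST ((hP.2.2.1 (F ∙ x) (finrank_span_singleton hx0) ?_).unique ⟨hS, ?_⟩ ⟨hT, ?_⟩)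
  · rwa [span_singleton_le_iff_mem]
  · exact (span_singleton_le_iff_mem _ _).2 hx.1
  · exact (span_singleton_le_iff_mem _ _).2 hx.2

lemma IsAvsp.quadNondeg_sup [FiniteDimensional F U] (hP : IsAvsp e r H Q G P) (hS : S ∈ P)
    (hT : T ∈ P) (hST : S ≠ T) (hne : S ⊓ T ≠ ⊥) :
    QuadNondeg (Q.comp ((S ⊔ T).comap H.subtype).subtype) := by
  obtain ⟨-, -, -, -, -, hinter, hnondeg⟩ := id hP
  refine (hnondeg S hS T hT hST ?_).1
  rw [← comap_inf, ← finrank_map_subtype_eq, map_comap_subtype,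
    inf_eq_right.2 (hP.inf_le hS hT hST)]
  exact le_antisymm (hinter S hS T hT hST) (one_le_finrank_iff.2 hne)

theorem IsAvsp.exists_isSpread_addHyperbolic [FiniteDimensional F U]
    (hP : IsAvsp e r H Q G P) (hG : IsGenerator Q G) (hU : finrank F U = finrank F H + 1)
    (hr : finrank F H = r + 1) (hdef : finrank F H = 2 * wittIndex Q + e) :
    ∃ 𝒮, IsSpread (addHyperbolic Q) 𝒮 := by
  obtain ⟨E, hE⟩ := exists_linearEquiv_prod_of_finrank_eq_add_one hU
  obtain ⟨hcard, hfin, -, hgen, -, -, -⟩ := id hP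
  rw [show (r + e + 1) / 2 = wittIndex Q + e by omega] at hcard
  rw [show (r + 3 - e) / 2 = wittIndex Q + 1 by omega] at hfin
  have : Finite P := Set.finite_of_ncard_pos (hcard ▸ pow_pos Fintype.card_pos _)
  choose h hh using fun S : P => exists_prod_one_mem_map hE (hfin S S.2).2
  refine ⟨_, isSpread_range_hyperbolicCone_quadricLift hdef hG (ι := P) ?_ hh (fun S => ?_)
    (fun S => ?_) (fun S => ?_) (fun S T hST => ?_) (fun S T hST hne => ?_)⟩
  · rw [Nat.card_coe_set_eq, hcard, Nat.card_eq_fintype_card]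
  · rw [LinearEquiv.finrank_map_eq, (hfin S S.2).1]
  · rw [comap_inl_map_eq_comap_subtype hE]
    exact (hgen S S.2).1.1
  · rw [comap_inl_map_eq_comap_subtype hE]
    exact disjoint_iff.2 (hgen S S.2).2
  · rintro _ ⟨⟨x, hxS, rfl⟩, hxT⟩
    refine (snd_eq_zero_iff_mem hE).2 (hP.inf_le S.2 T.2 (Subtype.coe_ne_coe.2 hST) ⟨hxS, ?_⟩)
    simpa using hxT
  · rw [← Submodule.map_sup, comap_inl_map_eq_comap_subtype hE]
    refine hP.quadNondeg_sup S.2 T.2 (Subtype.coe_ne_coe.2 hST) fun hbot => hne ?_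
    rw [← Submodule.map_inf _ E.injective, hbot, Submodule.map_bot]

end Avsp

theorem avsp_gives_spread {F : Type*} [Field F] [Fintype F] (e r : ℕ)
    (he : e = 0 ∨ e = 1 ∨ e = 2) (hr : 0 < r) (hmod : r % 2 = (e + 1) % 2)
    (U : Type*) [AddCommGroup U] [Module F U] [FiniteDimensional F U]
    (hU : Module.finrank F U = r + 2)
    (H : Submodule F U) (hH : Module.finrank F ↥H = r + 1)
    (Q : QuadraticForm F ↥H) (hQnd : QuadNondeg Q)
    (hdef : Module.finrank F ↥H = 2 * wittIndex Q + e)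
    (Pgen : Submodule F ↥H) (hPgen : IsGenerator Q Pgen)
    (P : Set (Submodule F U)) (hP : IsAvsp e r H Q Pgen P) :
    ∃ Q' : QuadraticForm F (Fin (r + 3) → F),
      QuadNondeg Q' ∧
      Module.finrank F (Fin (r + 3) → F) = 2 * wittIndex Q' + e ∧
      ∃ S : Set (Submodule F (Fin (r + 3) → F)), IsSpread Q' S := by
  obtain ⟨S, hS⟩ := hP.exists_isSpread_addHyperbolic hPgen (by omega) hH hdef
  have hfin : finrank F (H × F × F) = finrank F (Fin (r + 3) → F) := by
    simp only [finrank_prod, finrank_self, finrank_fin_fun, hH]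
  let φ := (addHyperbolic Q).isometryEquivOfCompLinearEquiv (LinearEquiv.ofFinrankEq _ _ hfin).symm
  refine ⟨_, (quadNondeg_addHyperbolic hQnd).of_isometryEquiv φ.symm, ?_, _, hS.comap φ.symm⟩
  rw [wittIndex_eq_of_isometryEquiv φ.symm, wittIndex_addHyperbolic, finrank_fin_fun]
  omega
end
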